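/- arXiv:1511.03993 — 2 statements merged into one kernel-verified Lean document; each statement's English description precedes it below -/
import Mathlib

section
/- For all real numbers x3 and u2 such that 14863*x3^3 - 23537*x3^2 + 3841*x3 - 159 = 0 and 44589*x3^2 - 65894*x3 + 2756*u2 + 3573 = 0, the quintuple (u0, u1, u2, x2, x3) with u0 = u1 = x3 and x2 = 1 satisfies g0 = g1 = g2 = g3 = g4 = 0. (These are naturally reductive Einstein solutions on E8(2) with u0 = u1 = x3 and x1 = x2.) -/
noncomputable def g0 (u0 u1 u2 x2 x3 : ℝ) : ℝ :=
  9*u0*u1*x2 ^ 2*x3 ^ 2 + 3*u0*u1*x2 ^ 2 + 18*u0*u1*x3 ^ 2 - 27*u1 ^ 2*x2 ^ 2*x3 ^ 2 - u1 ^ 2*x2 ^ 2 - 2*x2 ^ 2*x3 ^ 2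

noncomputable def g1 (u0 u1 u2 x2 x3 : ℝ) : ℝ :=
  27*u1 ^ 2*u2*x2 ^ 2*x3 ^ 2 + u1 ^ 2*u2*x2 ^ 2 - 12*u1*u2 ^ 2*x2 ^ 2*x3 ^ 2 - 6*u1*u2 ^ 2*x3 ^ 2 - 12*u1*x2 ^ 2*x3 ^ 2 + 2*u2*x2 ^ 2*x3 ^ 2

noncomputable def g2 (u0 u1 u2 x2 x3 : ℝ) : ℝ :=
  u0*u2*x2 ^ 2*x3 + 9*u1*u2*x2 ^ 2*x3 + 176*u2 ^ 2*x2 ^ 2*x3 + 36*u2 ^ 2*x3 + 60*u2*x2 ^ 3*x3 + 6*u2*x2 ^ 3 - 360*u2*x2 ^ 2*x3 + 6*u2*x2*x3 ^ 2 - 6*u2*x2 + 72*x2 ^ 2*x3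

noncomputable def g3 (u0 u1 u2 x2 x3 : ℝ) : ℝ :=
  -u0*x2 ^ 2*x3 + 4*u0*x3 - 9*u1*x2 ^ 2*x3 - 104*u2*x2 ^ 2*x3 + 104*u2*x3 - 120*x2 ^ 3*x3 - 18*x2 ^ 3 + 360*x2 ^ 2*x3 + 6*x2*x3 ^ 2 - 240*x2*x3 + 18*x2

noncomputable def g4 (u0 u1 u2 x2 x3 : ℝ) : ℝ :=
  9*u0*x2 ^ 2 - 4*u0*x3 ^ 2 + 9*u1*x2 ^ 2 - 104*u2*x3 ^ 2 + 60*x2 ^ 3*x3 ^ 2 + 174*x2 ^ 3*x3 - 360*x2 ^ 2*x3 - 174*x2*x3 ^ 3 + 240*x2*x3 ^ 2 + 150*x2*x3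

/-!
Let `𝔭` be the orthogonal complement of `𝔰𝔲(3) ⊕ 𝔢₆` in `𝔢₈`. The metrics with `u0 = u1 = x3 = t`,
`u2 = v`, `x1 = x2 = 1` are `t B` on `𝔰𝔲(3)`, `v B` on `𝔢₆` and `B` on `𝔭`; they are naturally
reductive, with Ricci eigenvalues

* `r_su3 = (1 / t + 9 t) / 40`,
* `r_e6 = (2 / v + 3 v) / 20`,
* `r_𝔭 = 5 / 12 - t / 45 - 13 v / 90`.

On them `g0` and `g3` vanish identically, and `g1`, `g2`, `g4` are multiples of the differences of
these eigenvalues. The equation `r_su3 = r_𝔭` determines `v` rationally in terms of `t`;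
substituting this into `r_e6 = r_𝔭` gives `(t - 1) * cubic(t) = 0`, where `t = 1` is the
bi-invariant metric and the roots of the cubic are the solutions in question.
-/

namespace NaturallyReductive

section CommRing

variable {R : Type*} [CommRing R]

/-- The difference of the Ricci eigenvalues on `𝔰𝔲(3)` and `𝔭`, with denominators cleared:
`360 t (r_su3 - r_𝔭)`. -/
def su3SubPerp (t v : R) : R := 89 * t ^ 2 + 52 * t * v - 150 * t + 9

/-- The difference of the Ricci eigenvalues on `𝔢₆` and `𝔭`, with denominators cleared:
`180 v (r_e6 - r_𝔭)`. -/
def e6SubPerp (t v : R) : R := 53 * v ^ 2 + 4 * t * v - 75 * v + 18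

/-- The difference of the Ricci eigenvalues on `𝔰𝔲(3)` and `𝔢₆`, with denominators cleared:
`40 t v (r_su3 - r_e6)`. -/
def su3SubE6 (t v : R) : R := 9 * t ^ 2 * v + v - 6 * t * v ^ 2 - 4 * t

/-- The cubic satisfied by the scale `t` of `𝔰𝔲(3)` in an Einstein metric of this family that is
not bi-invariant. -/
def einsteinCubic (t : R) : R := 14863 * t ^ 3 - 23537 * t ^ 2 + 3841 * t - 159

/-- The relation, linear in the scale `v` of `𝔢₆`, that determines `v` from a root `t` of
`einsteinCubic`. -/
def e6ScaleRelation (t v : R) : R := 44589 * t ^ 2 - 65894 * t + 2756 * v + 3573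

theorem nine_mul_su3SubE6 (t v : R) :
    9 * su3SubE6 t v = v * su3SubPerp t v - 2 * t * e6SubPerp t v := by
  unfold su3SubE6 su3SubPerp e6SubPerp
  ring

theorem fiftyThree_mul_su3SubPerp (t v : R) :
    53 * su3SubPerp t v = t * e6ScaleRelation t v - 3 * einsteinCubic t := by
  unfold su3SubPerp e6ScaleRelation einsteinCubic
  ring

theorem sq_mul_e6SubPerp (t v : R) :
    (52 * t) ^ 2 * e6SubPerp t v = 27 * (t - 1) * einsteinCubic t
      + (53 * (52 * t * v - (89 * t ^ 2 - 150 * t + 9)) + 208 * t ^ 2 - 3900 * t)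
        * su3SubPerp t v := by
  unfold e6SubPerp einsteinCubic su3SubPerp
  ring

end CommRing

section Field

variable {K : Type*} [Field K] [CharZero K] {t v : K}

theorem ne_zero_of_einsteinCubic_eq_zero (ht : einsteinCubic t = 0) : t ≠ 0 := by
  rintro rfl
  norm_num [einsteinCubic] at ht

theorem su3SubPerp_eq_zero (ht : einsteinCubic t = 0) (hv : e6ScaleRelation t v = 0) :
    su3SubPerp t v = 0 := by
  have h := fiftyThree_mul_su3SubPerp t v
  simpa [ht, hv] using h

theorem e6SubPerp_eq_zero (ht : einsteinCubic t = 0) (hsu3 : su3SubPerp t v = 0) :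
    e6SubPerp t v = 0 := by
  have h := sq_mul_e6SubPerp t v
  simpa [ht, hsu3, ne_zero_of_einsteinCubic_eq_zero ht] using h

theorem su3SubE6_eq_zero (hsu3 : su3SubPerp t v = 0) (he6 : e6SubPerp t v = 0) :
    su3SubE6 t v = 0 := by
  have h := nine_mul_su3SubE6 t v
  simpa [hsu3, he6] using h

end Field

section EinsteinEquations

variable (t v : ℝ)

theorem g0_eq_zero : g0 t t v 1 t = 0 := by
  unfold g0
  ring

theorem g1_eq_mul_su3SubE6 : g1 t t v 1 t = 3 * t ^ 2 * su3SubE6 t v := by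
  unfold g1 su3SubE6
  ring

theorem g2_eq_mul_e6SubPerp : g2 t t v 1 t = 4 * t * e6SubPerp t v := by
  unfold g2 e6SubPerp
  ring

theorem g3_eq_zero : g3 t t v 1 t = 0 := by
  unfold g3
  ring

theorem g4_eq_mul_su3SubPerp : g4 t t v 1 t = -(2 * t) * su3SubPerp t v := by
  unfold g4 su3SubPerp
  ring

end EinsteinEquations

end NaturallyReductive

open NaturallyReductive

theorem stmt12 :
    ∀ x3 u2 : ℝ,
      14863 * x3 ^ 3 - 23537 * x3 ^ 2 + 3841 * x3 - 159 = 0 →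
      44589 * x3 ^ 2 - 65894 * x3 + 2756 * u2 + 3573 = 0 →
      (g0 x3 x3 u2 1 x3 = 0 ∧ g1 x3 x3 u2 1 x3 = 0 ∧ g2 x3 x3 u2 1 x3 = 0 ∧ g3 x3 x3 u2 1 x3 = 0 ∧ g4 x3 x3 u2 1 x3 = 0) := by
  intro x3 u2 hcubic hscale
  have hsu3 : su3SubPerp x3 u2 = 0 := su3SubPerp_eq_zero hcubic hscale
  have he6 : e6SubPerp x3 u2 = 0 := e6SubPerp_eq_zero hcubic hsu3
  have hsu3e6 : su3SubE6 x3 u2 = 0 := su3SubE6_eq_zero hsu3 he6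
  refine ⟨g0_eq_zero x3 u2, ?_, ?_, g3_eq_zero x3 u2, ?_⟩
  · rw [g1_eq_mul_su3SubE6, hsu3e6, mul_zero]
  · rw [g2_eq_mul_e6SubPerp, he6, mul_zero]
  · rw [g4_eq_mul_su3SubPerp, hsu3, mul_zero]
end

section
/- For all real numbers x2 and u1 such that (x2 - 1)*(864*x2^3 - 1676*x2^2 + 973*x2 - 177) = 0 and 59*u1 - 3456*x2^3 + 10160*x2^2 - 9003*x2 + 2240 = 0, the quintuple (u0, u1, u2, x2, x3) with u0 = u2 = x2 and x3 = 1 satisfies g0 = g1 = g2 = g3 = g4 = 0. (These are naturally reductive Einstein solutions on E8(2) with u0 = u2 = x2 and x1 = x3; for x2 = 1 one recovers the bi-invariant metric.) -/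
/-!
When `u0 = u2 = x2 = x` and `x1 = x3 = 1`, the factor `x` multiplies `B` on
`k0 + k2 + p2 = e7` and `u = u1` multiplies `B` on `k1 = su(2)`, so the metric is naturally
reductive for `E7 × SU(2)`, with `p = p1 + p3`. Its Ricci eigenvalues are
* `r(e7) = (3 / x + 2 * x) / 20`,
* `r(su(2)) = (1 / u + 14 * u) / 60`,
* `r(p) = 1 / 2 - (19 * x + u) / 80`,

and the five equations reduce to `r(e7) = r(p)` and `r(su(2)) = r(e7)`. The first is linear in `u`;
eliminating `u` from the second leaves the quartic in `x`.
-/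

section Residuals

variable {R : Type*} [CommRing R]

/-- The Einstein condition `r(e7) = r(p)` with denominators cleared:
this is `80 * x * (r(e7) - r(p))`. -/
def e7Residual (x u : R) : R :=
  x * u + 27 * x ^ 2 - 40 * x + 12

/-- The Einstein condition `r(su(2)) = r(e7)` with denominators cleared:
this is `60 * x * u * (r(e7) - r(su(2)))`. -/
def su2Residual (x u : R) : R :=
  6 * x ^ 2 * u + 9 * u - x - 14 * x * u ^ 2

theorem mul_e7Residual_eq (x u : R) :
    59 * e7Residual x u =
      x * (59 * u - 3456 * x ^ 3 + 10160 * x ^ 2 - 9003 * x + 2240) +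
        4 * ((x - 1) * (864 * x ^ 3 - 1676 * x ^ 2 + 973 * x - 177)) := by
  unfold e7Residual
  ring

-- Euclidean division of `x * su2Residual x u`, a quadratic in `x * u`, by the monic linear
-- polynomial `e7Residual x u` in `x * u`.
theorem mul_su2Residual_eq (x u : R) :
    x * su2Residual x u =
      (6 * x ^ 2 + 9 - 14 * (x * u - (27 * x ^ 2 - 40 * x + 12))) * e7Residual x u -
        12 * ((x - 1) * (864 * x ^ 3 - 1676 * x ^ 2 + 973 * x - 177)) := by
  unfold su2Residual e7Residual
  ring

end Residuals

section NaturallyReductiveSlice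

variable (x u : ℝ)

theorem g0_eq_mul_su2Residual : g0 x u x x 1 = 2 * x * su2Residual x u := by
  unfold g0 su2Residual
  ring

theorem g1_eq_mul_su2Residual : g1 x u x x 1 = -2 * x ^ 2 * su2Residual x u := by
  unfold g1 su2Residual
  ring

theorem g2_eq_mul_e7Residual : g2 x u x x 1 = 9 * x ^ 2 * e7Residual x u := by
  unfold g2 e7Residual
  ring

theorem g3_eq_mul_e7Residual : g3 x u x x 1 = -9 * x * e7Residual x u := by
  unfold g3 e7Residual
  ring

theorem g4_eq_mul_e7Residual : g4 x u x x 1 = 9 * x * e7Residual x u := by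
  unfold g4 e7Residual
  ring

end NaturallyReductiveSlice

section Solutions

variable {x u : ℝ}

theorem ne_zero_of_quartic_eq_zero
    (quartic : (x - 1) * (864 * x ^ 3 - 1676 * x ^ 2 + 973 * x - 177) = 0) : x ≠ 0 := by
  rintro rfl
  norm_num at quartic

theorem e7Residual_eq_zero
    (quartic : (x - 1) * (864 * x ^ 3 - 1676 * x ^ 2 + 973 * x - 177) = 0)
    (linear : 59 * u - 3456 * x ^ 3 + 10160 * x ^ 2 - 9003 * x + 2240 = 0) :
    e7Residual x u = 0 := by
  have scaled : 59 * e7Residual x u = 0 := by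
    rw [mul_e7Residual_eq, quartic, linear, mul_zero, mul_zero, add_zero]
  exact (mul_eq_zero_iff_left (by norm_num)).mp scaled

theorem su2Residual_eq_zero
    (quartic : (x - 1) * (864 * x ^ 3 - 1676 * x ^ 2 + 973 * x - 177) = 0)
    (e7_eq_zero : e7Residual x u = 0) :
    su2Residual x u = 0 := by
  have scaled : x * su2Residual x u = 0 := by
    rw [mul_su2Residual_eq, quartic, e7_eq_zero, mul_zero, mul_zero, sub_zero]
  exact (mul_eq_zero_iff_left (ne_zero_of_quartic_eq_zero quartic)).mp scaled

end Solutions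

theorem stmt13 :
    ∀ x2 u1 : ℝ,
      (x2 - 1) * (864 * x2 ^ 3 - 1676 * x2 ^ 2 + 973 * x2 - 177) = 0 →
      59 * u1 - 3456 * x2 ^ 3 + 10160 * x2 ^ 2 - 9003 * x2 + 2240 = 0 →
      (g0 x2 u1 x2 x2 1 = 0 ∧ g1 x2 u1 x2 x2 1 = 0 ∧ g2 x2 u1 x2 x2 1 = 0 ∧ g3 x2 u1 x2 x2 1 = 0 ∧ g4 x2 u1 x2 x2 1 = 0) := by
  intro x u quartic linear
  have e7_eq_zero : e7Residual x u = 0 := e7Residual_eq_zero quartic linear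
  have su2_eq_zero : su2Residual x u = 0 := su2Residual_eq_zero quartic e7_eq_zero
  refine ⟨?_, ?_, ?_, ?_, ?_⟩
  · rw [g0_eq_mul_su2Residual, su2_eq_zero, mul_zero]
  · rw [g1_eq_mul_su2Residual, su2_eq_zero, mul_zero]
  · rw [g2_eq_mul_e7Residual, e7_eq_zero, mul_zero]
  · rw [g3_eq_mul_e7Residual, e7_eq_zero, mul_zero]
  · rw [g4_eq_mul_e7Residual, e7_eq_zero, mul_zero]
end
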